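/- arXiv:cs/0203025 — 3 statements merged into one kernel-verified Lean document; each statement's English description precedes it below -/
import Mathlib

section
/- Let P be a convex subset of ℝ³, O a point, and R ≥ 1 a real number such that the closed ball of radius 1 centered at O is contained in P and P is contained in the closed ball of radius R centered at O. If A and B are points with the closed segment [A,B] contained in the topological frontier of P, then the distance between A and B is at most 2·√(R² − 1). -/
open Metric

/-!
The midpoint of a segment in the frontier lies outside the open inner ball, while the endpoints lie
in the closed outer ball, so the median length formula bounds the length of the segment.
-/

section

variable {V E : Type*} [NormedAddCommGroup V] [InnerProductSpace ℝ V] [MetricSpace E]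
  [NormedAddTorsor V E]

theorem dist_le_two_mul_sqrt_of_le_dist_midpoint {O A B : E} {r R : ℝ} (hr : 0 ≤ r)
    (hA : dist A O ≤ R) (hB : dist B O ≤ R) (hM : r ≤ dist (midpoint ℝ A B) O) :
    dist A B ≤ 2 * √(R ^ 2 - r ^ 2) := by
  have median := EuclideanGeometry.dist_sq_add_dist_sq_eq_two_mul_dist_midpoint_sq_add_half_dist_sq
    O A B
  rw [dist_comm O A, dist_comm O B, dist_comm O (midpoint ℝ A B)] at median
  have hA_sq : dist A O ^ 2 ≤ R ^ 2 := by gcongr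
  have hB_sq : dist B O ^ 2 ≤ R ^ 2 := by gcongr
  have hM_sq : r ^ 2 ≤ dist (midpoint ℝ A B) O ^ 2 := by gcongr
  have half_dist_le : dist A B / 2 ≤ √(R ^ 2 - r ^ 2) := Real.le_sqrt_of_sq_le (by linarith)
  linarith

theorem segment_in_frontier_length_le_general {P : Set E} {O A B : E} {r R : ℝ} (hr : 0 ≤ r)
    (hin : ball O r ⊆ P) (hout : P ⊆ closedBall O R)
    (hA : A ∈ closure P) (hB : B ∈ closure P) (hM : midpoint ℝ A B ∉ interior P) :
    dist A B ≤ 2 * √(R ^ 2 - r ^ 2) := by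
  have closure_subset : closure P ⊆ closedBall O R := closure_minimal hout isClosed_closedBall
  have ball_subset_interior : ball O r ⊆ interior P := interior_maximal hin isOpen_ball
  have le_dist_midpoint : r ≤ dist (midpoint ℝ A B) O :=
    not_lt.mp fun h => hM (ball_subset_interior h)
  exact dist_le_two_mul_sqrt_of_le_dist_midpoint hr (closure_subset hA) (closure_subset hB)
    le_dist_midpoint

end

/-- Edge-length bound for a `(1,R)`-fat convex body: if `closedBall O 1 ⊆ P ⊆ closedBall O R`
with `P` convex, then any segment contained in the frontier of `P` has length at most
`2 * √(R² - 1)`. -/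
theorem segment_in_frontier_length_le
    (P : Set (EuclideanSpace ℝ (Fin 3))) (O : EuclideanSpace ℝ (Fin 3)) (R : ℝ)
    (hR : 1 ≤ R) (hconv : Convex ℝ P)
    (hin : closedBall O 1 ⊆ P) (hout : P ⊆ closedBall O R)
    (A B : EuclideanSpace ℝ (Fin 3))
    (hseg : segment ℝ A B ⊆ frontier P) :
    dist A B ≤ 2 * Real.sqrt (R ^ 2 - 1) := by
  simpa only [one_pow] using segment_in_frontier_length_le_general zero_le_one
    (ball_subset_closedBall.trans hin) hout (hseg (left_mem_segment ℝ A B)).1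
    (hseg (right_mem_segment ℝ A B)).1 (hseg (midpoint_mem_segment A B)).2
end

section
/- Let I be a finite index set, and for each i ∈ I let μᵢ ∈ ℝ² be nonzero and cᵢ ∈ ℝ. Suppose that (a) the feasible region {x ∈ ℝ² : ∀i, ⟨μᵢ, x⟩ ≤ cᵢ} is nonempty; (b) there are no two distinct indices i, j and real t > 0 with μᵢ = −t·μⱼ (no two normals are antiparallel); and (c) there are no three pairwise distinct indices i, j, k and point p ∈ ℝ² with ⟨μᵢ, p⟩ = cᵢ, ⟨μⱼ, p⟩ = cⱼ, and ⟨μₖ, p⟩ = cₖ (no three bounding lines are concurrent). Then there exists x ∈ ℝ² with ⟨μᵢ, x⟩ < cᵢ for all i; that is, the feasible region has nonempty interior. -/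
open scoped RealInnerProductSpace

/-!
At a feasible point where at most two constraints are tight, move in a direction in which every
tight constraint decreases: a short enough step also preserves the strictness of the finitely many
slack constraints. For two tight constraints such a direction exists because their normals are not
antiparallel.
-/

open Module

section OrderedField

variable {K E I : Type*} [Field K] [LinearOrder K] [IsStrictOrderedRing K]
  [AddCommGroup E] [Module K E]

theorem exists_pos_forall_add_mul_lt {a b c : K} (hac : a ≤ c) (hb : a = c → b < 0) :
    ∃ δ > 0, ∀ ε, 0 < ε → ε ≤ δ → a + ε * b < c := by
  rcases hac.eq_or_lt with rfl | hlt
  · exact ⟨1, one_pos, fun ε hε _ => add_lt_of_neg_right a (mul_neg_of_pos_of_neg hε (hb rfl))⟩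
  · obtain ⟨δ, hδ, hsmall⟩ := exists_pos_mul_lt (sub_pos.mpr hlt) |b|
    refine ⟨δ, hδ, fun ε hε hle => lt_sub_iff_add_lt'.mp ?_⟩
    calc ε * b ≤ ε * |b| := by gcongr; exact le_abs_self b
      _ ≤ δ * |b| := by gcongr
      _ < c - a := by rwa [mul_comm]

theorem exists_forall_apply_lt_of_tight_apply_neg [Finite I] {f : I → Dual K E} {c : I → K}
    {x d : E} (hx : ∀ i, f i x ≤ c i) (hd : ∀ i, f i x = c i → f i d < 0) :
    ∃ y, ∀ i, f i y < c i := by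
  choose δ hδ hstep using fun i => exists_pos_forall_add_mul_lt (hx i) (hd i)
  obtain ⟨⟨ε, hε⟩, hle⟩ := Finite.bddBelow_range fun i => (⟨δ i, hδ i⟩ : Set.Ioi (0 : K))
  refine ⟨x + ε • d, fun i => ?_⟩
  rw [map_add, map_smul, smul_eq_mul]
  exact hstep i ε hε (hle ⟨i, rfl⟩)

theorem exists_apply_neg_and_apply_neg {f g : Dual K E} (h : ¬SameRay K f (-g)) :
    ∃ d, f d < 0 ∧ g d < 0 := by
  have hf : f ≠ 0 := by
    rintro rfl
    exact h (SameRay.zero_left (-g))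
  obtain ⟨u, hu⟩ : ∃ u, f u = -1 := LinearMap.surjective hf (-1)
  have hfu : f u < 0 := hu.trans_lt neg_one_lt_zero
  by_cases hker : f.ker ≤ g.ker
  · obtain ⟨r, rfl⟩ : ∃ r : K, r • f = g := by
      have hspan : g ∈ Submodule.span K (Set.range fun _ : Unit => f) :=
        mem_span_of_iInf_ker_le_ker ((iInf_const (a := f.ker)).trans_le hker)
      rwa [Set.range_const, Submodule.mem_span_singleton] at hspan
    have hr : 0 < r := by
      by_contra! hr
      exact h (neg_smul r f ▸ SameRay.sameRay_nonneg_smul_right f (neg_nonneg.mpr hr))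
    exact ⟨u, hfu, mul_neg_of_pos_of_neg hr hfu⟩
  · -- Moving along `w` changes `g` at will while keeping `f` fixed.
    obtain ⟨w, hfw, hgw⟩ := SetLike.not_le_iff_exists.mp hker
    rw [LinearMap.mem_ker] at hfw hgw
    refine ⟨u + ((-1 - g u) / g w) • w, ?_, ?_⟩
    · simpa [hfw] using hfu
    · simp [hgw]

theorem exists_forall_mem_apply_neg {f : I → Dual K E} {s : Set I}
    (hray : ∀ i ∈ s, ∀ j ∈ s, ¬SameRay K (f i) (-f j))
    (hs : ∀ i ∈ s, ∀ j ∈ s, ∀ k ∈ s, i = j ∨ j = k ∨ i = k) :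
    ∃ d, ∀ i ∈ s, f i d < 0 := by
  rcases s.eq_empty_or_nonempty with rfl | ⟨a, ha⟩
  · exact ⟨0, by simp⟩
  obtain ⟨b, hb, hsub⟩ : ∃ b ∈ s, ∀ i ∈ s, i = a ∨ i = b := by
    by_cases hne : ∃ b ∈ s, a ≠ b
    · obtain ⟨b, hb, hab⟩ := hne
      exact ⟨b, hb, fun i hi => by grind⟩
    · exact ⟨a, ha, fun i hi => by grind⟩
  obtain ⟨d, hda, hdb⟩ := exists_apply_neg_and_apply_neg (hray a ha b hb)
  refine ⟨d, fun i hi => ?_⟩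
  rcases hsub i hi with rfl | rfl
  exacts [hda, hdb]

theorem not_sameRay_neg_of_forall_ne_neg_smul {v : I → E} (hv : ∀ i, v i ≠ 0)
    (hpar : ∀ i j, i ≠ j → ∀ t : K, 0 < t → v i ≠ -t • v j) (i j : I) :
    ¬SameRay K (v i) (-v j) := by
  intro h
  rcases eq_or_ne i j with rfl | hij
  · exact hv i (eq_zero_of_sameRay_self_neg h)
  · obtain ⟨t, ht, heq⟩ := h.exists_pos_right (hv i) (neg_ne_zero.mpr (hv j))
    exact hpar i j hij t ht (by rw [heq, smul_neg, neg_smul])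

-- For `i = j`, the hypothesis `hray` says that `f i ≠ 0`.
theorem feasible_region_has_interior_point_general [Finite I] {f : I → Dual K E} {c : I → K}
    {x : E} (hx : ∀ i, f i x ≤ c i)
    (hray : ∀ i j, f i x = c i → f j x = c j → ¬SameRay K (f i) (-f j))
    (hconc : ∀ i j k, f i x = c i → f j x = c j → f k x = c k → i = j ∨ j = k ∨ i = k) :
    ∃ y, ∀ i, f i y < c i := by
  obtain ⟨d, hd⟩ := exists_forall_mem_apply_neg (s := {i | f i x = c i})
    (fun i hi j hj => hray i j hi hj) (fun i hi j hj k hk => hconc i j k hi hj hk)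
  exact exists_forall_apply_lt_of_tight_apply_neg hx hd

end OrderedField

theorem sameRay_innerₗ_iff {F : Type*} [NormedAddCommGroup F] [InnerProductSpace ℝ F]
    {v w : F} : SameRay ℝ (innerₗ F v) (innerₗ F w) ↔ SameRay ℝ v w := by
  have hinj : Function.Injective (innerₗ F) := fun _ _ h =>
    ext_inner_right ℝ (LinearMap.congr_fun h)
  exact hinj.sameRay_map_iff

/-- A nonempty intersection of half-planes in ℝ² with nonzero normals, no two antiparallel
normals, and no three concurrent bounding lines, has nonempty interior: there is a point
strictly satisfying all constraints. -/
theorem feasible_region_has_interior_point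
    (I : Type*) [Fintype I] (μ : I → EuclideanSpace ℝ (Fin 2)) (c : I → ℝ)
    (hμ : ∀ i, μ i ≠ 0)
    (hfeas : ∃ x : EuclideanSpace ℝ (Fin 2), ∀ i, ⟪μ i, x⟫ ≤ c i)
    (hpar : ¬∃ (i j : I) (t : ℝ), i ≠ j ∧ 0 < t ∧ μ i = -t • μ j)
    (hconc : ¬∃ (i j k : I) (p : EuclideanSpace ℝ (Fin 2)),
        i ≠ j ∧ j ≠ k ∧ i ≠ k ∧ ⟪μ i, p⟫ = c i ∧ ⟪μ j, p⟫ = c j ∧ ⟪μ k, p⟫ = c k) :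
    ∃ x : EuclideanSpace ℝ (Fin 2), ∀ i, ⟪μ i, x⟫ < c i := by
  obtain ⟨x, hx⟩ := hfeas
  have hray : ∀ i j, ¬SameRay ℝ (μ i) (-μ j) :=
    not_sameRay_neg_of_forall_ne_neg_smul hμ fun i j hij t ht h => hpar ⟨i, j, t, hij, ht, h⟩
  exact feasible_region_has_interior_point_general (f := fun i => innerₗ _ (μ i)) hx
    (fun i j _ _ => by simpa only [← map_neg, sameRay_innerₗ_iff] using hray i j)
    (fun i j k hi hj hk => by by_contra! hne; exact hconc ⟨i, j, k, x, by tauto⟩)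
end

section
/- Let C be a compact convex subset of ℝ² containing the closed unit disk centered at the origin, and let v ∈ ℝ² be nonzero. Then the 1-dimensional Hausdorff measure of the set {x ∈ frontier C : there exists n ∈ ℝ² with ⟨n, v⟩ > 0 and ⟨n, y − x⟩ ≤ 0 for all y ∈ C} is at least 2. -/
open Metric MeasureTheory
open scoped RealInnerProductSpace ENNReal

/-!
Starting from an interior point of `C`, move in direction `v` until reaching the frontier of `C`.
Supporting functionals at the exit point are strictly larger there than at the starting point,
hence positive on `v`. So the part of the frontier facing `v` has at least the same shadow on the
hyperplane orthogonal to `v` as the interior of `C`, and orthogonal projection does not increase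
Hausdorff measure.
-/

open Set Module

section FacingFrontier

variable {E : Type*} [TopologicalSpace E] [AddCommGroup E] [Module ℝ E]

/-- The part of the frontier of `C` facing the direction `v`: the points at which `C` has a
supporting hyperplane whose outward normal is positive on `v`. Normals are encoded as continuous
linear functionals, which makes sense without an inner product; the exit points of rays in
direction `v` are of this kind. -/
def facingFrontier (C : Set E) (v : E) : Set E :=
  {x ∈ frontier C | ∃ f : StrongDual ℝ E, 0 < f v ∧ ∀ y ∈ C, f y ≤ f x}

variable [IsTopologicalAddGroup E] [ContinuousSMul ℝ E] {C : Set E} {v x : E}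

theorem exists_add_smul_mem_frontier {s : ℝ} (hx : x ∈ C) (hs : 0 ≤ s) (hxs : x + s • v ∉ C) :
    ∃ t : ℝ, 0 ≤ t ∧ x + t • v ∈ frontier C := by
  let ray : Ici (0 : ℝ) → E := fun t ↦ x + (t : ℝ) • v
  have hray : Continuous ray := by fun_prop
  have : PreconnectedSpace (Ici (0 : ℝ)) := Subtype.preconnectedSpace isPreconnected_Ici
  have hfr : (frontier (ray ⁻¹' C)).Nonempty := nonempty_frontier_iff.2
    ⟨⟨⟨0, self_mem_Ici⟩, by simpa [ray]⟩, (ne_univ_iff_exists_notMem _).2 ⟨⟨s, hs⟩, hxs⟩⟩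
  obtain ⟨t, ht⟩ := hfr
  exact ⟨t, t.2, hray.frontier_preimage_subset C ht⟩

theorem lt_of_mem_interior_of_forall_le {f : StrongDual ℝ E} {a : ℝ} (hf : f ≠ 0)
    (hfC : ∀ y ∈ C, f y ≤ a) (hx : x ∈ interior C) : f x < a := by
  have hopen : IsOpen (f '' interior C) := f.isOpenMap_of_ne_zero hf _ isOpen_interior
  have hsub : f '' interior C ⊆ Iic a := image_subset_iff.2 fun y hy ↦ hfC y (interior_subset hy)
  simpa using interior_maximal hsub hopen (mem_image_of_mem f hx)

theorem exists_add_smul_mem_facingFrontier (hC : Convex ℝ C) (hx : x ∈ interior C) {s : ℝ}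
    (hs : 0 ≤ s) (hxs : x + s • v ∉ C) : ∃ t : ℝ, x + t • v ∈ facingFrontier C v := by
  obtain ⟨t, ht, hfr⟩ := exists_add_smul_mem_frontier (interior_subset hx) hs hxs
  obtain ⟨f, hf, hfC⟩ := geometric_hahn_banach_of_nonempty_interior_point hC hfr.2 ⟨x, hx⟩
  have hlt : 0 < t * f v := by simpa using lt_of_mem_interior_of_forall_le hf hfC hx
  exact ⟨t, hfr, f, pos_of_mul_pos_right hlt ht, hfC⟩

theorem image_interior_subset_image_facingFrontier {F : Type*} [AddCommGroup F] [Module ℝ F]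
    {g : E →ₗ[ℝ] F} (hg : g v = 0) (hC : Convex ℝ C)
    (hexit : ∀ x ∈ interior C, ∃ s : ℝ, 0 ≤ s ∧ x + s • v ∉ C) :
    g '' interior C ⊆ g '' facingFrontier C v := by
  rintro _ ⟨x, hx, rfl⟩
  obtain ⟨s, hs, hxs⟩ := hexit x hx
  obtain ⟨t, ht⟩ := exists_add_smul_mem_facingFrontier hC hx hs hxs
  exact ⟨_, ht, by simp [hg]⟩

end FacingFrontier

section Normed

variable {E : Type*} [NormedAddCommGroup E] [NormedSpace ℝ E]

theorem exists_add_smul_notMem_of_isBounded {C : Set E} (hC : Bornology.IsBounded C) {v : E}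
    (hv : v ≠ 0) (x : E) : ∃ s : ℝ, 0 ≤ s ∧ x + s • v ∉ C := by
  obtain ⟨R, hR₀, hR⟩ := hC.subset_closedBall_lt 0 x
  have hv₀ : ‖v‖ ≠ 0 := norm_ne_zero_iff.2 hv
  refine ⟨(R + 1) / ‖v‖, by positivity, fun hmem ↦ ?_⟩
  have hle : ‖((R + 1) / ‖v‖) • v‖ ≤ R := by simpa using hR hmem
  rw [norm_smul_of_nonneg (by positivity), div_mul_cancel₀ _ hv₀] at hle
  linarith

theorem nonempty_linearIsometryEquiv_real_of_finrank_eq_one (h : finrank ℝ E = 1) :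
    Nonempty (ℝ ≃ₗᵢ[ℝ] E) := by
  have : Nontrivial E := nontrivial_of_finrank_eq_succ h
  obtain ⟨w, hw⟩ := exists_norm_eq E zero_le_one
  have hspan : Submodule.span ℝ {w} = ⊤ :=
    (Submodule.span_singleton_eq_top_iff ..).2
      (exists_smul_eq_of_finrank_eq_one h (norm_ne_zero_iff.1 (by simp [hw])))
  exact ⟨(LinearIsometryEquiv.toSpanUnitSingleton w hw).trans (.ofTop E _ hspan)⟩

theorem hausdorffMeasure_ball_of_finrank_eq_one [MeasurableSpace E] [BorelSpace E]
    (h : finrank ℝ E = 1) (x : E) (r : ℝ) : μH[1] (ball x r) = ENNReal.ofReal (2 * r) := by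
  obtain ⟨e⟩ := nonempty_linearIsometryEquiv_real_of_finrank_eq_one h
  calc μH[1] (ball x r) = μH[1] (e.toIsometryEquiv ⁻¹' ball x r) :=
        (e.toIsometryEquiv.hausdorffMeasure_preimage 1 _).symm
    _ = volume (ball (e.toIsometryEquiv.symm x) r) := by
        rw [IsometryEquiv.preimage_ball, hausdorffMeasure_real]
    _ = ENNReal.ofReal (2 * r) := Real.volume_ball _ _

end Normed

section InnerProduct

variable {E : Type*} [NormedAddCommGroup E] [InnerProductSpace ℝ E]

theorem mem_facingFrontier_iff_inner [CompleteSpace E] {C : Set E} {v x : E} :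
    x ∈ facingFrontier C v ↔
      x ∈ frontier C ∧ ∃ n : E, 0 < ⟪n, v⟫ ∧ ∀ y ∈ C, ⟪n, y - x⟫ ≤ 0 := by
  simp [facingFrontier, (InnerProductSpace.toDual ℝ E).surjective.exists, inner_sub_right]

theorem ball_subset_orthogonalProjectionOnto_image_ball (K : Submodule ℝ E)
    [K.HasOrthogonalProjection] (c : E) (r : ℝ) :
    ball (K.orthogonalProjectionOnto c) r ⊆ K.orthogonalProjectionOnto '' ball c r := by
  intro y hy
  refine ⟨c + (y - K.orthogonalProjectionOnto c : K), ?_, ?_⟩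
  · rwa [mem_ball, dist_self_add_left, Submodule.norm_coe, ← dist_eq_norm]
  · rw [map_add, K.orthogonalProjectionOnto_mem_subspace_eq_self, add_sub_cancel]

theorem boundary_chain_length_ge_two_general [CompleteSpace E] [MeasurableSpace E] [BorelSpace E]
    {C : Set E} (hconv : Convex ℝ C) {c : E} {r : ℝ} (hball : ball c r ⊆ C) {v : E}
    (hexit : ∀ x ∈ interior C, ∃ s : ℝ, 0 ≤ s ∧ x + s • v ∉ C) {d : ℝ} (hd : 0 ≤ d) :
    μH[d] (ball ((ℝ ∙ v)ᗮ.orthogonalProjectionOnto c) r) ≤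
      μH[d] {x ∈ frontier C | ∃ n : E, 0 < ⟪n, v⟫ ∧ ∀ y ∈ C, ⟪n, y - x⟫ ≤ 0} := by
  set P := (ℝ ∙ v)ᗮ.orthogonalProjectionOnto
  have hPv : P v = 0 := Submodule.orthogonalProjectionOnto_orthogonalComplement_singleton_eq_zero v
  calc μH[d] (ball (P c) r) ≤ μH[d] (P '' ball c r) :=
        measure_mono (ball_subset_orthogonalProjectionOnto_image_ball _ c r)
    _ ≤ μH[d] (P '' interior C) :=
        measure_mono (image_mono (interior_maximal hball isOpen_ball))
    _ ≤ μH[d] (P '' facingFrontier C v) :=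
        measure_mono (image_interior_subset_image_facingFrontier (g := P.toLinearMap)
          hPv hconv hexit)
    _ ≤ μH[d] (facingFrontier C v) := hausdorffMeasure_orthogonalProjectionOnto_le _ d _ hd
    _ = _ := congrArg _ (ext fun _ ↦ mem_facingFrontier_iff_inner)

end InnerProduct

/-- The chain argument: for a compact convex set `C ⊆ ℝ²` containing the closed unit disk
and any nonzero direction `v`, the part of the boundary of `C` admitting an outward normal
`n` with `⟪n, v⟫ > 0` has 1-dimensional Hausdorff measure at least `2`. -/
theorem boundary_chain_length_ge_two
    (C : Set (EuclideanSpace ℝ (Fin 2))) (hC : IsCompact C) (hconv : Convex ℝ C)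
    (hdisk : closedBall 0 1 ⊆ C)
    (v : EuclideanSpace ℝ (Fin 2)) (hv : v ≠ 0) :
    (2 : ℝ≥0∞) ≤
      μH[1] {x ∈ frontier C | ∃ n : EuclideanSpace ℝ (Fin 2),
        0 < ⟪n, v⟫ ∧ ∀ y ∈ C, ⟪n, y - x⟫ ≤ 0} := by
  have : Fact (finrank ℝ (EuclideanSpace ℝ (Fin 2)) = 1 + 1) := ⟨finrank_euclideanSpace_fin⟩
  simpa [hausdorffMeasure_ball_of_finrank_eq_one (Submodule.finrank_orthogonal_span_singleton hv)]
    using boundary_chain_length_ge_two_general hconv (ball_subset_closedBall.trans hdisk)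
      (fun x _ ↦ exists_add_smul_notMem_of_isBounded hC.isBounded hv x) zero_le_one
end
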